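/- Let H = SO_{2n(i+1)+1}(F) with respect to w_{2n(i+1)+1}, and let γ₁ = diag(I_{ni−1}, [[1,0,0],[1,1,0],[−1/2,−1,1]], I_{ni−1}) regarded inside the middle SO_{2ni+1} block, embedded via h ↦ diag(I_n, h, I_n). Then γ₁ ∈ SO_{2ni+1}(F), and conjugation by α₀ h_{γ₁} maps the subgroup U¹ of elements of the form (6.19) of the paper (with z ∈ Z_n upper unitriangular and row vectors y₁, y₂) isomorphically onto the subgroup of elements of the form (6.20): [[I_{ni−1}, 0, y'₂],[0, 1, y'₁],[0, 0, z*]]^∧ — i.e. the stated matrix conjugation identity holds. -/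

import Mathlib

open Matrix

def wMat (F : Type*) [Field F] (k : ℕ) : Matrix (Fin k) (Fin k) F :=
  Matrix.of fun i j => if (i : ℕ) + (j : ℕ) + 1 = k then 1 else 0

def IsSO {F : Type*} [Field F] {m : ℕ} (g : Matrix (Fin m) (Fin m) F) : Prop :=
  gᵀ * wMat F m * g = wMat F m ∧ g.det = 1

/-- `z* = w_n ᵗz⁻¹ w_n`. -/
noncomputable def zStar (F : Type*) [Field F] (n : ℕ) (z : Matrix (Fin n) (Fin n) F) :
    Matrix (Fin n) (Fin n) F :=
  wMat F n * (z⁻¹)ᵀ * wMat F n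

/-- `γ₁ = diag(I_{ni−1}, [[1,0,0],[1,1,0],[−1/2,−1,1]], I_{ni−1})`, of size `2ni+1`. -/
def gammaOne (F : Type*) [Field F] (n i : ℕ) :
    Matrix (Fin (2 * (n * i) + 1)) (Fin (2 * (n * i) + 1)) F :=
  Matrix.of fun p q =>
    if (p : ℕ) = (q : ℕ) then 1
    else if (p : ℕ) = n * i ∧ (q : ℕ) + 1 = n * i then 1
    else if (p : ℕ) = n * i + 1 ∧ (q : ℕ) + 1 = n * i then -(2 : F)⁻¹
    else if (p : ℕ) = n * i + 1 ∧ (q : ℕ) = n * i then -1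
    else 0

/-- `h_{γ₁} = diag(I_n, γ₁, I_n)`, of size `2n(i+1)+1 = 2n + 2ni + 1`. -/
def hGammaOne (F : Type*) [Field F] (n i : ℕ) :
    Matrix (Fin (2 * n + 2 * (n * i) + 1)) (Fin (2 * n + 2 * (n * i) + 1)) F :=
  Matrix.of fun p q =>
    if (p : ℕ) = (q : ℕ) then 1
    else if (p : ℕ) = n + n * i ∧ (q : ℕ) + 1 = n + n * i then 1
    else if (p : ℕ) = n + n * i + 1 ∧ (q : ℕ) + 1 = n + n * i then -(2 : F)⁻¹
    else if (p : ℕ) = n + n * i + 1 ∧ (q : ℕ) = n + n * i then -1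
    else 0

/-- The element `α₀` of equation (6.6):
`[[0, I_{ni}, 0, 0, 0],[0, 0, 0, 0, I_n],[0, 0, (−1)^n, 0, 0],[I_n, 0, 0, 0, 0],
[0, 0, 0, I_{ni}, 0]]` with row-block sizes `ni, n, 1, n, ni` and column-block sizes
`n, ni, 1, ni, n`. -/
def alphaSix (F : Type*) [Field F] (n i : ℕ) :
    Matrix (Fin (2 * n + 2 * (n * i) + 1)) (Fin (2 * n + 2 * (n * i) + 1)) F :=
  Matrix.of fun p q =>
    if (p : ℕ) < n * i then (if (q : ℕ) = n + (p : ℕ) then 1 else 0)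
    else if (p : ℕ) < n * i + n then
      (if (q : ℕ) = n + 2 * (n * i) + 1 + ((p : ℕ) - n * i) then 1 else 0)
    else if (p : ℕ) = n * i + n then
      (if (q : ℕ) = n + n * i then ((-1 : F)) ^ n else 0)
    else if (p : ℕ) < n * i + 2 * n + 1 then
      (if (q : ℕ) + (n * i + n + 1) = (p : ℕ) then 1 else 0)
    else (if (q : ℕ) = n + n * i + 1 + ((p : ℕ) - (n * i + 2 * n + 1)) then 1 else 0)

/-- An element of `U¹` as in equation (6.19), with block row sizes
`n, ni−1, 1, 1, 1, ni−1, n`: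
`[[z, 0, −y₁/2, −y₁, y₁, y₂, 0],[0, I_{ni−1}, 0, 0, 0, 0, y₂'],[0,0,1,0,0,0, y₁'],
[0,0,0,1,0,0, −y₁'],[0,0,0,0,1,0, −y₁'/2],[0,0,0,0,0,I_{ni−1},0],[0,...,0, z*]]`. -/
noncomputable def uOne (F : Type*) [Field F] (n i : ℕ)
    (z : Matrix (Fin n) (Fin n) F) (y₁ : Fin n → F)
    (y₂ : Matrix (Fin n) (Fin (n * i - 1)) F)
    (y₁' : Fin n → F) (y₂' : Matrix (Fin (n * i - 1)) (Fin n) F) :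
    Matrix (Fin (2 * n + 2 * (n * i) + 1)) (Fin (2 * n + 2 * (n * i) + 1)) F :=
  Matrix.of fun p q =>
    if hp : (p : ℕ) < n then
      if hq : (q : ℕ) < n then z ⟨p, hp⟩ ⟨q, hq⟩
      else if (q : ℕ) + 1 = n + n * i then -(y₁ ⟨p, hp⟩) * (2 : F)⁻¹
      else if (q : ℕ) = n + n * i then -(y₁ ⟨p, hp⟩)
      else if (q : ℕ) = n + n * i + 1 then y₁ ⟨p, hp⟩
      else if hq2 : n + n * i + 2 ≤ (q : ℕ) ∧ (q : ℕ) < n + 2 * (n * i) + 1 then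
        y₂ ⟨p, hp⟩ ⟨(q : ℕ) - (n + n * i + 2), by omega⟩
      else 0
    else if hp2 : (p : ℕ) + 1 < n + n * i then
      if (q : ℕ) = (p : ℕ) then 1
      else if hq : n + 2 * (n * i) + 1 ≤ (q : ℕ) then
        y₂' ⟨(p : ℕ) - n, by omega⟩
          ⟨(q : ℕ) - (n + 2 * (n * i) + 1), by have := q.isLt; omega⟩
      else 0
    else if hp3 : (p : ℕ) + 1 = n + n * i then
      if (q : ℕ) = (p : ℕ) then 1
      else if hq : n + 2 * (n * i) + 1 ≤ (q : ℕ) then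
        y₁' ⟨(q : ℕ) - (n + 2 * (n * i) + 1), by have := q.isLt; omega⟩
      else 0
    else if hp4 : (p : ℕ) = n + n * i then
      if (q : ℕ) = (p : ℕ) then 1
      else if hq : n + 2 * (n * i) + 1 ≤ (q : ℕ) then
        -(y₁' ⟨(q : ℕ) - (n + 2 * (n * i) + 1), by have := q.isLt; omega⟩)
      else 0
    else if hp5 : (p : ℕ) = n + n * i + 1 then
      if (q : ℕ) = (p : ℕ) then 1
      else if hq : n + 2 * (n * i) + 1 ≤ (q : ℕ) then
        -(y₁' ⟨(q : ℕ) - (n + 2 * (n * i) + 1), by have := q.isLt; omega⟩) * (2 : F)⁻¹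
      else 0
    else if hp6 : (p : ℕ) < n + 2 * (n * i) + 1 then
      (if (q : ℕ) = (p : ℕ) then 1 else 0)
    else
      if hq : n + 2 * (n * i) + 1 ≤ (q : ℕ) then
        zStar F n z ⟨(p : ℕ) - (n + 2 * (n * i) + 1), by have := p.isLt; omega⟩
          ⟨(q : ℕ) - (n + 2 * (n * i) + 1), by have := q.isLt; omega⟩
      else 0

/-- `B = [[I_{ni−1}, 0, y₂'],[0, 1, y₁'],[0, 0, z*]]` of size `ni + n = n(i+1)`. -/
noncomputable def Bmat (F : Type*) [Field F] (n i : ℕ)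
    (z : Matrix (Fin n) (Fin n) F) (y₁' : Fin n → F)
    (y₂' : Matrix (Fin (n * i - 1)) (Fin n) F) :
    Matrix (Fin (n * i + n)) (Fin (n * i + n)) F :=
  Matrix.of fun p q =>
    if hp : (p : ℕ) + 1 < n * i then
      if (q : ℕ) = (p : ℕ) then 1
      else if hq : n * i ≤ (q : ℕ) then
        y₂' ⟨(p : ℕ), by omega⟩ ⟨(q : ℕ) - n * i, by have := q.isLt; omega⟩
      else 0
    else if hp2 : (p : ℕ) + 1 = n * i then
      if (q : ℕ) = (p : ℕ) then 1
      else if hq : n * i ≤ (q : ℕ) then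
        y₁' ⟨(q : ℕ) - n * i, by have := q.isLt; omega⟩
      else 0
    else
      if hq : n * i ≤ (q : ℕ) then
        zStar F n z ⟨(p : ℕ) - n * i, by have := p.isLt; omega⟩
          ⟨(q : ℕ) - n * i, by have := q.isLt; omega⟩
      else 0

/-- The element `B^∧ = diag(B, 1, B*)` of equation (6.20), with
`B* = w ᵗB⁻¹ w`. -/
noncomputable def hatMat (F : Type*) [Field F] (n i : ℕ)
    (z : Matrix (Fin n) (Fin n) F) (y₁' : Fin n → F)
    (y₂' : Matrix (Fin (n * i - 1)) (Fin n) F) :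
    Matrix (Fin (2 * n + 2 * (n * i) + 1)) (Fin (2 * n + 2 * (n * i) + 1)) F :=
  Matrix.of fun p q =>
    if hp : (p : ℕ) < n * i + n then
      if hq : (q : ℕ) < n * i + n then Bmat F n i z y₁' y₂' ⟨p, hp⟩ ⟨q, hq⟩ else 0
    else if hp2 : (p : ℕ) = n * i + n then
      (if (q : ℕ) = n * i + n then 1 else 0)
    else
      if hq : n * i + n + 1 ≤ (q : ℕ) then
        (wMat F (n * i + n) * ((Bmat F n i z y₁' y₂')⁻¹)ᵀ * wMat F (n * i + n))
          ⟨(p : ℕ) - (n * i + n + 1), by have := p.isLt; omega⟩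
          ⟨(q : ℕ) - (n * i + n + 1), by have := q.isLt; omega⟩
      else 0

def GenG (F : Type*) [Field F] (N d : ℕ) : Matrix (Fin N) (Fin N) F :=
  Matrix.of fun p q =>
    if (p : ℕ) = (q : ℕ) then 1
    else if (p : ℕ) = d ∧ (q : ℕ) + 1 = d then 1
    else if (p : ℕ) = d + 1 ∧ (q : ℕ) + 1 = d then -(2 : F)⁻¹
    else if (p : ℕ) = d + 1 ∧ (q : ℕ) = d then -1
    else 0

theorem GenG_eq (F : Type*) [Field F] (N d : ℕ) (a b c : Fin N) (ha : (a : ℕ) + 1 = d)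
    (hb : (b : ℕ) = d) (hc : (c : ℕ) = d + 1) :
    GenG F N d = 1 + Matrix.single b a 1 + Matrix.single c a (-(2 : F)⁻¹)
      + Matrix.single c b (-1) := by
  ext p q
  simp only [GenG, Matrix.of_apply, Matrix.add_apply, Matrix.one_apply, Matrix.single_apply,
    Fin.ext_iff]
  split_ifs <;> first | omega | simp

theorem GenG_mul (F : Type*) [Field F] (N d : ℕ) (a b c : Fin N) (ha : (a : ℕ) + 1 = d)
    (hb : (b : ℕ) = d) (hc : (c : ℕ) = d + 1) (M : Matrix (Fin N) (Fin N) F) (p q : Fin N) :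
    (GenG F N d * M) p q = M p q + (if p = b then M a q else 0)
      + (if p = c then -(2 : F)⁻¹ * M a q - M b q else 0) := by
  rw [GenG_eq F N d a b c ha hb hc]
  simp only [add_mul, Matrix.add_apply, one_mul]
  have key : ∀ (x y : Fin N) (t : F), (Matrix.single x y t * M) p q
      = if p = x then t * M y q else 0 := by
    intro x y t
    split_ifs with h
    · subst h; simp
    · simp [h]
  rw [key, key, key]
  split_ifs <;> ring

theorem mul_GenG (F : Type*) [Field F] (N d : ℕ) (a b c : Fin N) (ha : (a : ℕ) + 1 = d)
    (hb : (b : ℕ) = d) (hc : (c : ℕ) = d + 1) (M : Matrix (Fin N) (Fin N) F) (p q : Fin N) :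
    (M * GenG F N d) p q = M p q + (if q = a then M p b - (2 : F)⁻¹ * M p c else 0)
      + (if q = b then - M p c else 0) := by
  rw [GenG_eq F N d a b c ha hb hc]
  simp only [mul_add, Matrix.add_apply, mul_one]
  have key : ∀ (x y : Fin N) (t : F), (M * Matrix.single x y t) p q
      = if q = y then M p x * t else 0 := by
    intro x y t
    split_ifs with h
    · subst h; simp
    · simp [h]
  rw [key, key, key]
  split_ifs <;> ring

theorem wMat_mul (F : Type*) [Field F] (N : ℕ) (M : Matrix (Fin N) (Fin N) F) (p q : Fin N) :
    (wMat F N * M) p q = M p.rev q := by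
  rw [Matrix.mul_apply, Finset.sum_eq_single p.rev]
  · have : (p : ℕ) + (p.rev : ℕ) + 1 = N := by rw [Fin.val_rev]; omega
    simp [wMat, Fin.val_rev]; omega
  · intro x _ hx
    have : ¬ ((p : ℕ) + (x : ℕ) + 1 = N) := by
      intro h; apply hx; ext; rw [Fin.val_rev]; omega
    simp [wMat, this]
  · simp

theorem wMat_wMat (F : Type*) [Field F] (N : ℕ) : wMat F N * wMat F N = 1 := by
  ext p q
  rw [wMat_mul]
  simp only [wMat, Matrix.of_apply, Matrix.one_apply, Fin.ext_iff, Fin.val_rev]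
  congr 1
  apply propext; omega

theorem GenG_orth (F : Type*) [Field F] (h2 : (2 : F) ≠ 0) (N d : ℕ) (hd : 1 ≤ d)
    (hN : N = 2 * d + 1) :
    (GenG F N d)ᵀ * wMat F N * GenG F N d = wMat F N := by
  have hh : (2 : F)⁻¹ + (2 : F)⁻¹ = 1 := by field_simp; norm_num
  ext p q
  rw [mul_GenG F N d ⟨d-1, by omega⟩ ⟨d, by omega⟩ ⟨d+1, by omega⟩ (by simp; omega) rfl rfl]
  have key : ∀ x y : Fin N, ((GenG F N d)ᵀ * wMat F N) x y = GenG F N d y.rev x := by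
    intro x y
    have : (GenG F N d)ᵀ * wMat F N = (wMat F N * GenG F N d)ᵀ := by
      rw [Matrix.transpose_mul]; congr 1
      ext p q; simp [wMat, add_comm]
    rw [this, Matrix.transpose_apply, wMat_mul]
  simp only [key]
  have hp := p.isLt
  have hq := q.isLt
  have Ga : ∀ x : Fin N, (x : ℕ) + 1 = d → GenG F N d x p = if (p : ℕ) + 1 = d then 1 else 0 := by
    intro x hx
    simp only [GenG, Matrix.of_apply]
    split_ifs <;> first | omega | rfl
  have Gb : ∀ x : Fin N, (x : ℕ) = d → GenG F N d x p =
      if (p : ℕ) + 1 = d then 1 else if (p : ℕ) = d then 1 else 0 := by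
    intro x hx
    simp only [GenG, Matrix.of_apply]
    split_ifs <;> first | omega | rfl
  have Gc : ∀ x : Fin N, (x : ℕ) = d + 1 → GenG F N d x p =
      if (p : ℕ) + 1 = d then -(2 : F)⁻¹ else if (p : ℕ) = d then -1 else
      if (p : ℕ) = d + 1 then 1 else 0 := by
    intro x hx
    simp only [GenG, Matrix.of_apply]
    split_ifs <;> first | omega | rfl
  have Go : ∀ x : Fin N, (x : ℕ) ≠ d → (x : ℕ) ≠ d + 1 → GenG F N d x p =
      if (p : ℕ) = x then 1 else 0 := by
    intro x hx hx
    simp only [GenG, Matrix.of_apply]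
    split_ifs <;> first | omega | rfl
  rw [Gb (Fin.rev ⟨d, by omega⟩) (by simp only [Fin.val_rev]; omega),
    Ga (Fin.rev ⟨d + 1, by omega⟩) (by simp only [Fin.val_rev]; omega)]
  have hw : wMat F N p q = if (p : ℕ) + q + 1 = N then 1 else 0 := rfl
  rw [hw]
  simp only [Fin.ext_iff]
  by_cases hqa : (q : ℕ) + 1 = d
  · rw [Gc q.rev (by rw [Fin.val_rev]; omega)]
    clear Ga Gb Gc Go key hw
    split_ifs <;> first | omega | grind
  by_cases hqb : (q : ℕ) = d
  · rw [Gb q.rev (by rw [Fin.val_rev]; omega)]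
    clear Ga Gb Gc Go key hw
    split_ifs <;> first | omega | grind
  · rw [Go q.rev (by rw [Fin.val_rev]; omega) (by rw [Fin.val_rev]; omega), Fin.val_rev]
    split_ifs <;> first | omega | simp

theorem GenG_det (F : Type*) [Field F] (N d : ℕ) : (GenG F N d).det = 1 := by
  rw [Matrix.det_of_isLowerTriangular]
  · simp [GenG]
  · intro p q h
    have h : (p : ℕ) < q := h
    simp only [GenG, Matrix.of_apply]
    split_ifs <;> first | omega | rfl

def vOne {F : Type*} [Field F] (n i : ℕ)
    (u : Matrix (Fin (2 * n + 2 * (n * i) + 1)) (Fin (2 * n + 2 * (n * i) + 1)) F) :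
    Matrix (Fin (2 * n + 2 * (n * i) + 1)) (Fin (2 * n + 2 * (n * i) + 1)) F :=
  Matrix.of fun p q =>
    if (p : ℕ) < n ∧ ((q : ℕ) + 1 = n + n * i ∨ (q : ℕ) = n + n * i) then 0
    else if ((p : ℕ) = n + n * i ∨ (p : ℕ) = n + n * i + 1) ∧ n + 2 * (n * i) + 1 ≤ (q : ℕ) then 0
    else u p q

theorem u1 (F : Type*) [Field F] (n i : ℕ)
    (z : Matrix (Fin n) (Fin n) F) (y₁ : Fin n → F)
    (y₂ : Matrix (Fin n) (Fin (n * i - 1)) F)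
    (y₁' : Fin n → F) (y₂' : Matrix (Fin (n * i - 1)) (Fin n) F)
    (p q : Fin (2 * n + 2 * (n * i) + 1))
    (hp : (p : ℕ) < n) :
    uOne F n i z y₁ y₂ y₁' y₂' p q = if hq : (q : ℕ) < n then z ⟨p, hp⟩ ⟨q, hq⟩
      else if (q : ℕ) + 1 = n + n * i then -(y₁ ⟨p, hp⟩) * (2 : F)⁻¹
      else if (q : ℕ) = n + n * i then -(y₁ ⟨p, hp⟩)
      else if (q : ℕ) = n + n * i + 1 then y₁ ⟨p, hp⟩
      else if hq2 : n + n * i + 2 ≤ (q : ℕ) ∧ (q : ℕ) < n + 2 * (n * i) + 1 then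
        y₂ ⟨p, hp⟩ ⟨(q : ℕ) - (n + n * i + 2), by omega⟩
      else 0 := by
  rw [uOne, Matrix.of_apply, dif_pos (by omega)]

theorem u2 (F : Type*) [Field F] (n i : ℕ)
    (z : Matrix (Fin n) (Fin n) F) (y₁ : Fin n → F)
    (y₂ : Matrix (Fin n) (Fin (n * i - 1)) F)
    (y₁' : Fin n → F) (y₂' : Matrix (Fin (n * i - 1)) (Fin n) F)
    (p q : Fin (2 * n + 2 * (n * i) + 1))
    (hp : n ≤ (p : ℕ)) (hp2 : (p : ℕ) + 1 < n + n * i) :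
    uOne F n i z y₁ y₂ y₁' y₂' p q = if (q : ℕ) = (p : ℕ) then 1
      else if hq : n + 2 * (n * i) + 1 ≤ (q : ℕ) then
        y₂' ⟨(p : ℕ) - n, by omega⟩ ⟨(q : ℕ) - (n + 2 * (n * i) + 1), by have := q.isLt; omega⟩
      else 0 := by
  rw [uOne, Matrix.of_apply, dif_neg (by omega), dif_pos (by omega)]

theorem u3 (F : Type*) [Field F] (n i : ℕ)
    (z : Matrix (Fin n) (Fin n) F) (y₁ : Fin n → F)
    (y₂ : Matrix (Fin n) (Fin (n * i - 1)) F)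
    (y₁' : Fin n → F) (y₂' : Matrix (Fin (n * i - 1)) (Fin n) F)
    (p q : Fin (2 * n + 2 * (n * i) + 1))
    (hni : 1 ≤ n * i) (hp : (p : ℕ) + 1 = n + n * i) :
    uOne F n i z y₁ y₂ y₁' y₂' p q = if (q : ℕ) = (p : ℕ) then 1
      else if hq : n + 2 * (n * i) + 1 ≤ (q : ℕ) then
        y₁' ⟨(q : ℕ) - (n + 2 * (n * i) + 1), by have := q.isLt; omega⟩
      else 0 := by
  rw [uOne, Matrix.of_apply, dif_neg (by omega), dif_neg (by omega), dif_pos (by omega)]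

theorem u4 (F : Type*) [Field F] (n i : ℕ)
    (z : Matrix (Fin n) (Fin n) F) (y₁ : Fin n → F)
    (y₂ : Matrix (Fin n) (Fin (n * i - 1)) F)
    (y₁' : Fin n → F) (y₂' : Matrix (Fin (n * i - 1)) (Fin n) F)
    (p q : Fin (2 * n + 2 * (n * i) + 1))
    (hp : (p : ℕ) = n + n * i) :
    uOne F n i z y₁ y₂ y₁' y₂' p q = if (q : ℕ) = (p : ℕ) then 1
      else if hq : n + 2 * (n * i) + 1 ≤ (q : ℕ) then
        -(y₁' ⟨(q : ℕ) - (n + 2 * (n * i) + 1), by have := q.isLt; omega⟩)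
      else 0 := by
  rw [uOne, Matrix.of_apply, dif_neg (by omega), dif_neg (by omega), dif_neg (by omega), dif_pos (by omega)]

theorem u5 (F : Type*) [Field F] (n i : ℕ)
    (z : Matrix (Fin n) (Fin n) F) (y₁ : Fin n → F)
    (y₂ : Matrix (Fin n) (Fin (n * i - 1)) F)
    (y₁' : Fin n → F) (y₂' : Matrix (Fin (n * i - 1)) (Fin n) F)
    (p q : Fin (2 * n + 2 * (n * i) + 1))
    (hp : (p : ℕ) = n + n * i + 1) :
    uOne F n i z y₁ y₂ y₁' y₂' p q = if (q : ℕ) = (p : ℕ) then 1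
      else if hq : n + 2 * (n * i) + 1 ≤ (q : ℕ) then
        -(y₁' ⟨(q : ℕ) - (n + 2 * (n * i) + 1), by have := q.isLt; omega⟩) * (2 : F)⁻¹
      else 0 := by
  rw [uOne, Matrix.of_apply, dif_neg (by omega), dif_neg (by omega), dif_neg (by omega), dif_neg (by omega), dif_pos (by omega)]

theorem u6 (F : Type*) [Field F] (n i : ℕ)
    (z : Matrix (Fin n) (Fin n) F) (y₁ : Fin n → F)
    (y₂ : Matrix (Fin n) (Fin (n * i - 1)) F)
    (y₁' : Fin n → F) (y₂' : Matrix (Fin (n * i - 1)) (Fin n) F)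
    (p q : Fin (2 * n + 2 * (n * i) + 1))
    (hp : n + n * i + 2 ≤ (p : ℕ)) (hp2 : (p : ℕ) < n + 2 * (n * i) + 1) :
    uOne F n i z y₁ y₂ y₁' y₂' p q = if (q : ℕ) = (p : ℕ) then 1 else 0 := by
  rw [uOne, Matrix.of_apply, dif_neg (by omega), dif_neg (by omega), dif_neg (by omega), dif_neg (by omega), dif_neg (by omega), dif_pos (by omega)]

theorem u7 (F : Type*) [Field F] (n i : ℕ)
    (z : Matrix (Fin n) (Fin n) F) (y₁ : Fin n → F)
    (y₂ : Matrix (Fin n) (Fin (n * i - 1)) F)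
    (y₁' : Fin n → F) (y₂' : Matrix (Fin (n * i - 1)) (Fin n) F)
    (p q : Fin (2 * n + 2 * (n * i) + 1))
    (hni : 1 ≤ n * i) (hp : n + 2 * (n * i) + 1 ≤ (p : ℕ)) :
    uOne F n i z y₁ y₂ y₁' y₂' p q = if hq : n + 2 * (n * i) + 1 ≤ (q : ℕ) then
        zStar F n z ⟨(p : ℕ) - (n + 2 * (n * i) + 1), by have := p.isLt; omega⟩
          ⟨(q : ℕ) - (n + 2 * (n * i) + 1), by have := q.isLt; omega⟩
      else 0 := by
  rw [uOne, Matrix.of_apply, dif_neg (by omega), dif_neg (by omega), dif_neg (by omega), dif_neg (by omega), dif_neg (by omega), dif_neg (by omega)]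

theorem v1 (F : Type*) [Field F] (n i : ℕ)
    (z : Matrix (Fin n) (Fin n) F) (y₁ : Fin n → F)
    (y₂ : Matrix (Fin n) (Fin (n * i - 1)) F)
    (y₁' : Fin n → F) (y₂' : Matrix (Fin (n * i - 1)) (Fin n) F)
    (p q : Fin (2 * n + 2 * (n * i) + 1))
    (hni : 1 ≤ n * i) (hp : (p : ℕ) < n) :
    vOne n i (uOne F n i z y₁ y₂ y₁' y₂') p q = if hq : (q : ℕ) < n then z ⟨p, hp⟩ ⟨q, hq⟩
      else if (q : ℕ) = n + n * i + 1 then y₁ ⟨p, hp⟩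
      else if hq2 : n + n * i + 2 ≤ (q : ℕ) ∧ (q : ℕ) < n + 2 * (n * i) + 1 then
        y₂ ⟨p, hp⟩ ⟨(q : ℕ) - (n + n * i + 2), by omega⟩
      else 0 := by
  rw [vOne, Matrix.of_apply, u1 _ _ _ _ _ _ _ _ _ _ hp]
  split_ifs <;> first | omega | rfl

theorem v2 (F : Type*) [Field F] (n i : ℕ)
    (z : Matrix (Fin n) (Fin n) F) (y₁ : Fin n → F)
    (y₂ : Matrix (Fin n) (Fin (n * i - 1)) F)
    (y₁' : Fin n → F) (y₂' : Matrix (Fin (n * i - 1)) (Fin n) F)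
    (p q : Fin (2 * n + 2 * (n * i) + 1))
    (hp : n ≤ (p : ℕ)) (hp2 : (p : ℕ) + 1 < n + n * i) :
    vOne n i (uOne F n i z y₁ y₂ y₁' y₂') p q = if (q : ℕ) = (p : ℕ) then 1
      else if hq : n + 2 * (n * i) + 1 ≤ (q : ℕ) then
        y₂' ⟨(p : ℕ) - n, by omega⟩ ⟨(q : ℕ) - (n + 2 * (n * i) + 1), by have := q.isLt; omega⟩
      else 0 := by
  rw [vOne, Matrix.of_apply, if_neg (by omega), if_neg (by omega), u2 _ _ _ _ _ _ _ _ _ _ hp hp2]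

theorem v3 (F : Type*) [Field F] (n i : ℕ)
    (z : Matrix (Fin n) (Fin n) F) (y₁ : Fin n → F)
    (y₂ : Matrix (Fin n) (Fin (n * i - 1)) F)
    (y₁' : Fin n → F) (y₂' : Matrix (Fin (n * i - 1)) (Fin n) F)
    (p q : Fin (2 * n + 2 * (n * i) + 1))
    (hni : 1 ≤ n * i) (hp : (p : ℕ) + 1 = n + n * i) :
    vOne n i (uOne F n i z y₁ y₂ y₁' y₂') p q = if (q : ℕ) = (p : ℕ) then 1
      else if hq : n + 2 * (n * i) + 1 ≤ (q : ℕ) then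
        y₁' ⟨(q : ℕ) - (n + 2 * (n * i) + 1), by have := q.isLt; omega⟩
      else 0 := by
  rw [vOne, Matrix.of_apply, if_neg (by omega), if_neg (by omega), u3 _ _ _ _ _ _ _ _ _ _ hni hp]

theorem v4 (F : Type*) [Field F] (n i : ℕ)
    (z : Matrix (Fin n) (Fin n) F) (y₁ : Fin n → F)
    (y₂ : Matrix (Fin n) (Fin (n * i - 1)) F)
    (y₁' : Fin n → F) (y₂' : Matrix (Fin (n * i - 1)) (Fin n) F)
    (p q : Fin (2 * n + 2 * (n * i) + 1))
    (hp : n + n * i ≤ (p : ℕ)) (hp2 : (p : ℕ) < n + 2 * (n * i) + 1) :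
    vOne n i (uOne F n i z y₁ y₂ y₁' y₂') p q = if (q : ℕ) = (p : ℕ) then 1 else 0 := by
  rw [vOne, Matrix.of_apply, if_neg (by omega)]
  by_cases h4 : (p : ℕ) = n + n * i
  · rw [u4 _ _ _ _ _ _ _ _ _ _ h4]
    split_ifs <;> first | omega | rfl
  by_cases h5 : (p : ℕ) = n + n * i + 1
  · rw [u5 _ _ _ _ _ _ _ _ _ _ h5]
    split_ifs <;> first | omega | rfl
  rw [if_neg (by omega), u6 _ _ _ _ _ _ _ _ _ _ (by omega) hp2]

theorem v7 (F : Type*) [Field F] (n i : ℕ)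
    (z : Matrix (Fin n) (Fin n) F) (y₁ : Fin n → F)
    (y₂ : Matrix (Fin n) (Fin (n * i - 1)) F)
    (y₁' : Fin n → F) (y₂' : Matrix (Fin (n * i - 1)) (Fin n) F)
    (p q : Fin (2 * n + 2 * (n * i) + 1))
    (hni : 1 ≤ n * i) (hp : n + 2 * (n * i) + 1 ≤ (p : ℕ)) :
    vOne n i (uOne F n i z y₁ y₂ y₁' y₂') p q = if hq : n + 2 * (n * i) + 1 ≤ (q : ℕ) then
        zStar F n z ⟨(p : ℕ) - (n + 2 * (n * i) + 1), by have := p.isLt; omega⟩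
          ⟨(q : ℕ) - (n + 2 * (n * i) + 1), by have := q.isLt; omega⟩
      else 0 := by
  rw [vOne, Matrix.of_apply, if_neg (by omega), if_neg (by omega), u7 _ _ _ _ _ _ _ _ _ _ hni hp]

theorem h_conj (F : Type*) [Field F] (h2 : (2 : F) ≠ 0)
    (n i : ℕ) (hni : 1 ≤ n * i)
    (z : Matrix (Fin n) (Fin n) F) (y₁ : Fin n → F)
      (y₂ : Matrix (Fin n) (Fin (n * i - 1)) F)
      (y₁' : Fin n → F) (y₂' : Matrix (Fin (n * i - 1)) (Fin n) F) :
    hGammaOne F n i * uOne F n i z y₁ y₂ y₁' y₂' =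
      vOne n i (uOne F n i z y₁ y₂ y₁' y₂') * hGammaOne F n i := by
  have hh : (2 : F)⁻¹ + (2 : F)⁻¹ = 1 := by field_simp; norm_num
  change GenG F _ (n + n * i) * _ = _ * GenG F _ (n + n * i)
  ext p q
  obtain ⟨a, ha⟩ : ∃ a : Fin (2 * n + 2 * (n * i) + 1), (a : ℕ) + 1 = n + n * i :=
    ⟨⟨n + n * i - 1, by omega⟩, by simp; omega⟩
  obtain ⟨b, hb⟩ : ∃ a : Fin (2 * n + 2 * (n * i) + 1), (a : ℕ) = n + n * i :=
    ⟨⟨n + n * i, by omega⟩, rfl⟩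
  obtain ⟨c, hc⟩ : ∃ a : Fin (2 * n + 2 * (n * i) + 1), (a : ℕ) = n + n * i + 1 :=
    ⟨⟨n + n * i + 1, by omega⟩, rfl⟩
  rw [GenG_mul F _ _ a b c ha hb hc, mul_GenG F _ _ a b c ha hb hc]
  set u := uOne F n i z y₁ y₂ y₁' y₂' with hu
  have hq := q.isLt
  have hp := p.isLt
  by_cases h1 : (p : ℕ) < n
  · have e1 := v1 F n i z y₁ y₂ y₁' y₂' p q hni h1
    have e2 := v1 F n i z y₁ y₂ y₁' y₂' p b hni h1
    have e3 := v1 F n i z y₁ y₂ y₁' y₂' p c hni h1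
    have e4 := u1 F n i z y₁ y₂ y₁' y₂' p q h1
    rw [dif_neg (by omega), if_neg (by omega), dif_neg (by omega)] at e2
    rw [dif_neg (by omega), if_pos (by omega)] at e3
    rw [← hu] at e1 e2 e3 e4
    rw [e1, e2, e3, e4]
    simp only [Fin.ext_iff]
    clear e1 e2 e3 e4 hu
    split_ifs <;> first | omega | ring1
  have vb : vOne n i u p b = if p = b then 1 else 0 := by
    rw [hu]
    by_cases h2 : (p : ℕ) + 1 < n + n * i
    · rw [v2 _ _ _ _ _ _ _ _ _ _ (by omega) h2, if_neg (by omega), dif_neg (by omega), if_neg]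
      rw [Fin.ext_iff]; omega
    by_cases h3 : (p : ℕ) + 1 = n + n * i
    · rw [v3 _ _ _ _ _ _ _ _ _ _ hni h3, if_neg (by omega), dif_neg (by omega), if_neg]
      rw [Fin.ext_iff]; omega
    by_cases h4 : (p : ℕ) < n + 2 * (n * i) + 1
    · rw [v4 _ _ _ _ _ _ _ _ _ _ (by omega) h4]
      simp only [Fin.ext_iff, eq_comm]
    · rw [v7 _ _ _ _ _ _ _ _ _ _ hni (by omega), dif_neg (by omega), if_neg]
      rw [Fin.ext_iff]; omega
  have vc : vOne n i u p c = if p = c then 1 else 0 := by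
    rw [hu]
    by_cases h2 : (p : ℕ) + 1 < n + n * i
    · rw [v2 _ _ _ _ _ _ _ _ _ _ (by omega) h2, if_neg (by omega), dif_neg (by omega), if_neg]
      rw [Fin.ext_iff]; omega
    by_cases h3 : (p : ℕ) + 1 = n + n * i
    · rw [v3 _ _ _ _ _ _ _ _ _ _ hni h3, if_neg (by omega), dif_neg (by omega), if_neg]
      rw [Fin.ext_iff]; omega
    by_cases h4 : (p : ℕ) < n + 2 * (n * i) + 1
    · rw [v4 _ _ _ _ _ _ _ _ _ _ (by omega) h4]
      simp only [Fin.ext_iff, eq_comm]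
    · rw [v7 _ _ _ _ _ _ _ _ _ _ hni (by omega), dif_neg (by omega), if_neg]
      rw [Fin.ext_iff]; omega
  rw [vb, vc]
  have ua := u3 F n i z y₁ y₂ y₁' y₂' a q hni ha
  have ub := u4 F n i z y₁ y₂ y₁' y₂' b q hb
  have uc := u5 F n i z y₁ y₂ y₁' y₂' c q hc
  rw [← hu] at ua ub uc
  by_cases hpb : p = b
  · subst hpb
    have hv := v4 F n i z y₁ y₂ y₁' y₂' p q (by omega) (by omega)
    rw [← hu] at hv
    rw [hv, ua, ub]
    simp only [Fin.ext_iff]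
    split_ifs <;> first | omega | ring1
  by_cases hpc : p = c
  · subst hpc
    have hv := v4 F n i z y₁ y₂ y₁' y₂' p q (by omega) (by omega)
    rw [← hu] at hv
    rw [hv, ua, ub, uc]
    simp only [Fin.ext_iff]
    split_ifs <;> first | omega | grind
  · have hv : vOne n i u p q = u p q := by
      rw [vOne, Matrix.of_apply]
      rw [Fin.ext_iff] at hpb hpc
      rw [if_neg (by omega), if_neg (by omega)]
    rw [hv]; simp [hpb, hpc]

def sigN (n m p : ℕ) : ℕ :=
  if p < m then n + p
  else if p < m + n then n + 2 * m + 1 + (p - m)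
  else if p = m + n then n + m
  else if p < m + 2 * n + 1 then p - (m + n + 1)
  else n + m + 1 + (p - (m + 2 * n + 1))

theorem sigN_lt (n m p : ℕ) (hp : p < 2 * n + 2 * m + 1) : sigN n m p < 2 * n + 2 * m + 1 := by
  unfold sigN; split_ifs <;> omega

def sigF (n m : ℕ) (p : Fin (2 * n + 2 * m + 1)) : Fin (2 * n + 2 * m + 1) :=
  ⟨sigN n m p, sigN_lt n m p p.isLt⟩

theorem sigF_inj (n m : ℕ) : Function.Injective (sigF n m) := by
  intro p q h
  have h : sigN n m p = sigN n m q := congrArg Fin.val h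
  ext
  have := p.isLt
  have := q.isLt
  unfold sigN at h
  split_ifs at h <;> omega

noncomputable def sigE (n m : ℕ) : Fin (2 * n + 2 * m + 1) ≃ Fin (2 * n + 2 * m + 1) :=
  Equiv.ofBijective (sigF n m) (Finite.injective_iff_bijective.mp (sigF_inj n m))

theorem sigE_val (n m : ℕ) (p) : ((sigE n m p : Fin _) : ℕ) = sigN n m p := rfl

def cF (F : Type*) [Field F] (n m : ℕ) (p : Fin (2 * n + 2 * m + 1)) : F :=
  if (p : ℕ) = m + n then (-1) ^ n else 1

theorem alphaSix_eq (F : Type*) [Field F] (n i : ℕ) :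
    alphaSix F n i = Matrix.diagonal (cF F n (n * i)) *
      (1 : Matrix _ _ F).submatrix (sigE n (n * i)) id := by
  ext p q
  rw [Matrix.diagonal_mul]
  simp only [alphaSix, cF, Matrix.of_apply, Matrix.submatrix_apply, Matrix.one_apply, Fin.ext_iff,
    sigE_val, sigN, id]
  have := p.isLt
  have := q.isLt
  split_ifs <;> first | omega | simp

theorem alphaSix_det (F : Type*) [Field F] (n i : ℕ) : IsUnit (alphaSix F n i).det := by
  rw [alphaSix_eq, Matrix.det_mul, Matrix.det_diagonal]
  apply IsUnit.mul
  · rw [isUnit_iff_ne_zero, Finset.prod_ne_zero_iff]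
    intro p _
    unfold cF
    split_ifs
    · exact pow_ne_zero _ (by simp)
    · exact one_ne_zero
  · have : (1 : Matrix (Fin (2 * n + 2 * (n * i) + 1)) (Fin (2 * n + 2 * (n * i) + 1)) F).submatrix
      (sigE n (n * i)) id * (1 : Matrix _ _ F).submatrix id (sigE n (n * i)) = 1 := by
      rw [← Matrix.submatrix_mul _ _ _ _ _ Function.bijective_id]; simp
    exact (Matrix.isUnit_iff_isUnit_det _).mp (IsUnit.of_mul_eq_one _ this)

/-- conjugation by alpha -/
theorem alphaSix_conj (F : Type*) [Field F] (n i : ℕ) (v : Matrix (Fin (2 * n + 2 * (n * i) + 1)) (Fin (2 * n + 2 * (n * i) + 1)) F)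
    (h1 : ∀ p : Fin (2 * n + 2 * (n * i) + 1), (p : ℕ) ≠ n + n * i → ∀ q : Fin (2 * n + 2 * (n * i) + 1), (q : ℕ) = n + n * i → v p q = 0)
    (h3 : ∀ p : Fin (2 * n + 2 * (n * i) + 1), (p : ℕ) = n + n * i → ∀ q : Fin (2 * n + 2 * (n * i) + 1), (q : ℕ) ≠ n + n * i → v p q = 0) :
    alphaSix F n i * v = v.submatrix (sigE n (n * i)) (sigE n (n * i)) * alphaSix F n i := by
  rw [alphaSix_eq]
  have e : (1 : Matrix (Fin (2 * n + 2 * (n * i) + 1)) (Fin (2 * n + 2 * (n * i) + 1)) F).submatrix (sigE n (n * i)) id * v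
     = v.submatrix (sigE n (n * i)) (sigE n (n * i)) *
        (1 : Matrix _ _ F).submatrix (sigE n (n * i)) id := by
    rw [Matrix.submatrix_mul_equiv, Matrix.mul_one]
    have := Matrix.submatrix_mul (1 : Matrix _ _ F) v (sigE n (n * i)) id id Function.bijective_id
    rw [Matrix.one_mul] at this
    rw [this]; rfl
  have e2 : Matrix.diagonal (cF F n (n * i)) * v.submatrix (sigE n (n * i)) (sigE n (n * i))
     = v.submatrix (sigE n (n * i)) (sigE n (n * i)) * Matrix.diagonal (cF F n (n * i)) := by
    ext p q
    rw [Matrix.diagonal_mul, Matrix.mul_diagonal, Matrix.submatrix_apply]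
    have hs : ∀ p : Fin (2 * n + 2 * (n * i) + 1), (p : ℕ) = n * i + n ↔ ((sigE n (n * i) p : Fin _) : ℕ) = n + n * i := by
      intro p
      have := p.isLt
      rw [sigE_val, sigN]
      split_ifs <;> omega
    unfold cF
    by_cases hp : (p : ℕ) = n * i + n <;> by_cases hq : (q : ℕ) = n * i + n
    · simp [hp, hq, mul_comm]
    · rw [h3 _ ((hs p).mp hp) _ (fun h => hq ((hs q).mpr h))]; simp
    · rw [h1 _ (fun h => hp ((hs p).mpr h)) _ ((hs q).mp hq)]; simp
    · simp [hp, hq]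
  rw [Matrix.mul_assoc, e, ← Matrix.mul_assoc, e2, Matrix.mul_assoc]

theorem wMat_sig (F : Type*) [Field F] (n m : ℕ) :
    (wMat F (2 * n + 2 * m + 1)).submatrix (sigE n m) (sigE n m) = wMat F (2 * n + 2 * m + 1) := by
  ext p q
  have := p.isLt
  have := q.isLt
  simp only [wMat, Matrix.submatrix_apply, Matrix.of_apply, sigE_val]
  congr 1
  apply propext
  unfold sigN
  split_ifs <;> omega

/-- block extraction -/
theorem block_star (F : Type*) [Field F] (n m : ℕ)
    (D : Matrix (Fin (2 * n + 2 * m + 1)) (Fin (2 * n + 2 * m + 1)) F)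
    (B : Matrix (Fin (m + n)) (Fin (m + n)) F)
    (hD : Dᵀ * wMat F _ * D = wMat F _)
    (hB : ∀ (p q : Fin (m + n)), D ⟨p, by omega⟩ ⟨q, by omega⟩ = B p q)
    (h0 : ∀ p q : Fin (2 * n + 2 * m + 1), m + n ≤ (p : ℕ) → (q : ℕ) < m + n → D p q = 0) (p q : Fin (m + n)) :
    D ⟨p + (m + n + 1), by omega⟩ ⟨q + (m + n + 1), by omega⟩
      = (wMat F (m + n) * (B⁻¹)ᵀ * wMat F (m + n)) p q := by
  set C : Matrix (Fin (m + n)) (Fin (m + n)) F :=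
    Matrix.of fun p q => D ⟨p + (m + n + 1), by omega⟩ ⟨q + (m + n + 1), by omega⟩ with hC
  have key : Bᵀ * (wMat F (m + n) * C) = wMat F (m + n) := by
    ext x y
    have hxy := congrFun (congrFun hD ⟨x, by omega⟩) ⟨y + (m + n + 1), by omega⟩
    rw [Matrix.mul_assoc, Matrix.mul_apply] at hxy
    simp only [wMat_mul, Matrix.transpose_apply] at hxy
    rw [Matrix.mul_apply]
    simp only [wMat_mul, Matrix.transpose_apply]
    have hr : wMat F (2 * n + 2 * m + 1) ⟨x, by omega⟩ ⟨y + (m + n + 1), by omega⟩ =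
       wMat F (m + n) x y := by
      simp only [wMat, Matrix.of_apply]
      congr 1; apply propext; omega
    rw [hr] at hxy
    rw [← hxy]
    apply Fintype.sum_of_injective
      (fun k : Fin (m + n) => (⟨k, by omega⟩ : Fin (2 * n + 2 * m + 1)))
    · intro k l h
      simpa [Fin.ext_iff] using h
    · intro k hk
      have : m + n ≤ (k : ℕ) := by
        by_contra hlt
        exact hk ⟨⟨k, by omega⟩, rfl⟩
      rw [h0 _ _ this x.isLt, zero_mul]
    · intro k
      rw [hB]
      congr 1
      simp only [hC, Matrix.of_apply]
      congr 1
      ext; simp only [Fin.val_rev]; omega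
  have k2 : (wMat F (m + n) * C * wMat F (m + n)) = (Bᵀ)⁻¹ := by
    symm
    apply Matrix.inv_eq_right_inv
    rw [← Matrix.mul_assoc, key, wMat_wMat]
  change C p q = _
  rw [Matrix.transpose_nonsing_inv, ← k2]
  have : wMat F (m + n) * (wMat F (m + n) * C * wMat F (m + n)) * wMat F (m + n) = C := by
    rw [← Matrix.mul_assoc, ← Matrix.mul_assoc, wMat_wMat, Matrix.mul_assoc, wMat_wMat]; simp
  rw [this]

theorem v_col (F : Type*) [Field F] {n : ℕ} (i : ℕ) (hni : 1 ≤ n * i)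
    (z : Matrix (Fin n) (Fin n) F) (y₁ : Fin n → F)
    (y₂ : Matrix (Fin n) (Fin (n * i - 1)) F)
    (y₁' : Fin n → F) (y₂' : Matrix (Fin (n * i - 1)) (Fin n) F)
    (p b : Fin (2 * n + 2 * (n * i) + 1)) (hb : (b : ℕ) = n + n * i) :
    vOne n i (uOne F n i z y₁ y₂ y₁' y₂') p b = if p = b then 1 else 0 := by
  by_cases h1 : (p : ℕ) < n
  · rw [v1 _ _ _ _ _ _ _ _ _ _ hni h1, dif_neg (by omega), if_neg (by omega), dif_neg (by omega),
      if_neg]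
    rw [Fin.ext_iff]; omega
  by_cases h2 : (p : ℕ) + 1 < n + n * i
  · rw [v2 _ _ _ _ _ _ _ _ _ _ (by omega) h2, if_neg (by omega), dif_neg (by omega), if_neg]
    rw [Fin.ext_iff]; omega
  by_cases h3 : (p : ℕ) + 1 = n + n * i
  · rw [v3 _ _ _ _ _ _ _ _ _ _ hni h3, if_neg (by omega), dif_neg (by omega), if_neg]
    rw [Fin.ext_iff]; omega
  by_cases h4 : (p : ℕ) < n + 2 * (n * i) + 1
  · rw [v4 _ _ _ _ _ _ _ _ _ _ (by omega) h4]
    simp only [Fin.ext_iff, eq_comm]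
  · rw [v7 _ _ _ _ _ _ _ _ _ _ hni (by omega), dif_neg (by omega), if_neg]
    rw [Fin.ext_iff]; omega

theorem hat_eq (F : Type*) [Field F] (n i : ℕ) (hni : 1 ≤ n * i)
    (z : Matrix (Fin n) (Fin n) F) (y₁ : Fin n → F)
      (y₂ : Matrix (Fin n) (Fin (n * i - 1)) F)
      (y₁' : Fin n → F) (y₂' : Matrix (Fin (n * i - 1)) (Fin n) F)
    (D) (hDd : D = (vOne n i (uOne F n i z y₁ y₂ y₁' y₂')).submatrix
      (sigE n (n * i)) (sigE n (n * i)))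
    (hD : Dᵀ * wMat F _ * D = wMat F _) :
    D = hatMat F n i z y₁' y₂' := by
  have hDa : ∀ p q, D p q = vOne n i (uOne F n i z y₁ y₂ y₁' y₂') (sigE n (n * i) p)
      (sigE n (n * i) q) := by
    intro p q; rw [hDd]; rfl
  have hB : ∀ (p q : Fin (n * i + n)), D ⟨p, by omega⟩ ⟨q, by omega⟩ = Bmat F n i z y₁' y₂' p q := by
    intro p q
    have hp := p.isLt
    have hq := q.isLt
    rw [hDa]
    have sq : (((sigE n (n * i) ⟨q, by omega⟩ : Fin _)) : ℕ) =
      if (q : ℕ) < n * i then n + (q : ℕ) else n + 2 * (n * i) + 1 + ((q : ℕ) - n * i) := by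
      rw [sigE_val, sigN]; split_ifs <;> first | omega | rfl
    have sp : (((sigE n (n * i) ⟨p, by omega⟩ : Fin _)) : ℕ) =
      if (p : ℕ) < n * i then n + (p : ℕ) else n + 2 * (n * i) + 1 + ((p : ℕ) - n * i) := by
      rw [sigE_val, sigN]; split_ifs <;> first | omega | rfl
    generalize sigE n (n * i) ⟨p, by omega⟩ = P at *
    generalize sigE n (n * i) ⟨q, by omega⟩ = Q at *
    rw [Bmat, Matrix.of_apply]
    by_cases h1 : (p : ℕ) + 1 < n * i
    · rw [if_pos (by omega)] at sp
      rw [dif_pos h1, v2 _ _ _ _ _ _ _ _ _ _ (by omega) (by omega)]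
      by_cases h2 : (q : ℕ) < n * i
      · rw [if_pos h2] at sq
        split_ifs <;> first | omega | rfl
      · rw [if_neg h2] at sq
        rw [if_neg (by omega), dif_pos (by omega), if_neg (by omega), dif_pos (by omega)]
        congr 1 <;> · ext; simp; omega
    by_cases h2 : (p : ℕ) + 1 = n * i
    · rw [if_pos (by omega)] at sp
      rw [dif_neg h1, dif_pos h2, v3 _ _ _ _ _ _ _ _ _ _ (by omega) (by omega)]
      by_cases h2 : (q : ℕ) < n * i
      · rw [if_pos h2] at sq
        split_ifs <;> first | omega | rfl
      · rw [if_neg h2] at sq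
        rw [if_neg (by omega), dif_pos (by omega), if_neg (by omega), dif_pos (by omega)]
        congr 1; ext; simp; omega
    rw [if_neg (by omega)] at sp
    rw [dif_neg h1, dif_neg h2, v7 _ _ _ _ _ _ _ _ _ _ (by omega) (by omega)]
    by_cases h2 : (q : ℕ) < n * i
    · rw [if_pos h2] at sq
      split_ifs <;> first | omega | rfl
    · rw [if_neg h2] at sq
      rw [dif_pos (by omega), dif_pos (by omega)]
      congr 1 <;> · ext; simp; omega
  have h0 : ∀ p q : Fin (2 * n + 2 * (n * i) + 1),
      n * i + n ≤ (p : ℕ) → (q : ℕ) < n * i + n → D p q = 0 := by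
    intro p q hp hq
    have hp' := p.isLt
    rw [hDa]
    have sq : (((sigE n (n * i) q : Fin _)) : ℕ) =
      if (q : ℕ) < n * i then n + (q : ℕ) else n + 2 * (n * i) + 1 + ((q : ℕ) - n * i) := by
      rw [sigE_val, sigN]; split_ifs <;> first | omega | rfl
    have sp := sigE_val n (n * i) p
    rw [sigN, if_neg (by omega), if_neg (by omega)] at sp
    generalize sigE n (n * i) p = P at *
    generalize sigE n (n * i) q = Q at *
    by_cases h1 : (P : ℕ) < n
    · rw [v1 _ _ _ _ _ _ _ _ _ _ hni h1]
      split_ifs at sp sq ⊢ <;> first | omega | rfl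
    · rw [v4 _ _ _ _ _ _ _ _ _ _ (by split_ifs at sp <;> omega) (by split_ifs at sp <;> omega)]
      rw [if_neg]
      split_ifs at sp sq <;> omega
  have h0' : ∀ p q : Fin (2 * n + 2 * (n * i) + 1),
      (p : ℕ) ≤ n * i + n → n * i + n < (q : ℕ) → D p q = 0 := by
    intro p q hp hq
    have hq' := q.isLt
    rw [hDa]
    have sq : (((sigE n (n * i) q : Fin _)) : ℕ) < n ∨
        n + n * i + 1 ≤ (((sigE n (n * i) q : Fin _)) : ℕ) ∧
        (((sigE n (n * i) q : Fin _)) : ℕ) < n + 2 * (n * i) + 1 := by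
      rw [sigE_val, sigN]; split_ifs <;> omega
    have sp : n ≤ (((sigE n (n * i) p : Fin _)) : ℕ) ∧
        (((sigE n (n * i) p : Fin _)) : ℕ) ≤ n + n * i ∨
        n + 2 * (n * i) + 1 ≤ (((sigE n (n * i) p : Fin _)) : ℕ) := by
      rw [sigE_val, sigN]; split_ifs <;> omega
    generalize sigE n (n * i) p = P at *
    generalize sigE n (n * i) q = Q at *
    by_cases h1 : (P : ℕ) + 1 < n + n * i
    · rw [v2 _ _ _ _ _ _ _ _ _ _ (by omega) h1, if_neg (by omega), dif_neg (by omega)]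
    by_cases h2 : (P : ℕ) + 1 = n + n * i
    · rw [v3 _ _ _ _ _ _ _ _ _ _ hni h2, if_neg (by omega), dif_neg (by omega)]
    by_cases h3 : (P : ℕ) = n + n * i
    · rw [v4 _ _ _ _ _ _ _ _ _ _ (by omega) (by omega), if_neg (by omega)]
    · rw [v7 _ _ _ _ _ _ _ _ _ _ hni (by omega), dif_neg (by omega)]
  have hm : ∀ p q : Fin (2 * n + 2 * (n * i) + 1),
      (q : ℕ) = n * i + n → D p q = if p = q then 1 else 0 := by
    intro p q hq
    rw [hDa, v_col _ _ hni _ _ _ _ _ _ _ (by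
      rw [sigE_val, sigN]; split_ifs <;> omega)]
    simp
  ext p q
  have hp := p.isLt
  have hq := q.isLt
  simp only [hatMat, Matrix.of_apply]
  by_cases h1 : (p : ℕ) < n * i + n
  · rw [dif_pos h1]
    split_ifs with h2
    · exact hB ⟨p, h1⟩ ⟨q, h2⟩
    · by_cases h3 : (q : ℕ) = n * i + n
      · rw [hm _ _ h3, if_neg]; rw [Fin.ext_iff]; omega
      · exact h0' _ _ (by omega) (by omega)
  rw [dif_neg h1]
  by_cases h2 : (p : ℕ) = n * i + n
  · rw [dif_pos h2]
    split_ifs with h3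
    · rw [hm _ _ h3, if_pos]; ext; omega
    · by_cases h4 : (q : ℕ) < n * i + n
      · exact h0 _ _ (by omega) h4
      · exact h0' _ _ (by omega) (by omega)
  rw [dif_neg h2]
  split_ifs with h3
  · have := block_star F n (n * i) D _ hD hB h0 ⟨p - (n * i + n + 1), by omega⟩ ⟨q - (n * i + n + 1), by omega⟩
    rw [← this]
    congr 1 <;> · ext; simp; omega
  · by_cases h4 : (q : ℕ) = n * i + n
    · rw [hm _ _ h4, if_neg]; rw [Fin.ext_iff]; omega
    · exact h0 _ _ (by omega) (by omega)

/-- `γ₁ ∈ SO_{2ni+1}(F)`, and conjugation by `α₀ h_{γ₁}` carries the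
elements of `U¹` (equation (6.19)) to the elements of equation (6.20). -/
theorem gammaOne_conjugation (F : Type*) [Field F] (h2 : (2 : F) ≠ 0)
    (n i : ℕ) (hn : 1 ≤ n) (hi : 1 ≤ i) :
    IsSO (gammaOne F n i) ∧
    ∀ (z : Matrix (Fin n) (Fin n) F) (y₁ : Fin n → F)
      (y₂ : Matrix (Fin n) (Fin (n * i - 1)) F)
      (y₁' : Fin n → F) (y₂' : Matrix (Fin (n * i - 1)) (Fin n) F),
      (∀ p : Fin n, z p p = 1) →
      (∀ p q : Fin n, (q : ℕ) < (p : ℕ) → z p q = 0) →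
      IsSO (uOne F n i z y₁ y₂ y₁' y₂') →
      alphaSix F n i * hGammaOne F n i * uOne F n i z y₁ y₂ y₁' y₂' *
          (alphaSix F n i * hGammaOne F n i)⁻¹
        = hatMat F n i z y₁' y₂' := by
  have hni : 1 ≤ n * i := Nat.mul_pos hn hi
  refine ⟨⟨GenG_orth F h2 _ (n * i) hni rfl, GenG_det F _ _⟩, ?_⟩
  intro z y₁ y₂ y₁' y₂' _ _ hu
  have hG : (hGammaOne F n i)ᵀ * wMat F _ * hGammaOne F n i = wMat F _ :=
    GenG_orth F h2 _ (n + n * i) (by omega) (by omega)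
  have hGd : (hGammaOne F n i).det = 1 := GenG_det F _ (n + n * i)
  have hc := h_conj F h2 n i hni z y₁ y₂ y₁' y₂'
  have hu1 := hu.1
  set u := uOne F n i z y₁ y₂ y₁' y₂' with hudef
  set h := hGammaOne F n i with hh
  set v := vOne n i u with hv
  set w := wMat F (2 * n + 2 * (n * i) + 1) with hw
  have hunit : IsUnit h.det := by rw [hGd]; exact isUnit_one
  have hvw : vᵀ * w * v = w := by
    have hhi : h * h⁻¹ = 1 := Matrix.mul_nonsing_inv _ hunit
    have e1 : hᵀ * (vᵀ * w * v) * h = w := by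
      calc hᵀ * (vᵀ * w * v) * h = (v * h)ᵀ * w * (v * h) := by
            rw [Matrix.transpose_mul]; simp only [Matrix.mul_assoc]
        _ = uᵀ * (hᵀ * w * h) * u := by
            rw [← hc, Matrix.transpose_mul]; simp only [Matrix.mul_assoc]
        _ = w := by rw [hG, hu1]
    have e2 : hᵀ * (vᵀ * w * v) * h = hᵀ * w * h := by rw [e1, hG]
    have hiu : IsUnit h := (Matrix.isUnit_iff_isUnit_det _).mpr hunit
    have hiu' : IsUnit hᵀ := (Matrix.isUnit_iff_isUnit_det _).mpr (by
      rw [Matrix.det_transpose]; exact hunit)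
    exact hiu'.mul_left_cancel (hiu.mul_right_cancel e2)
  have ha : alphaSix F n i * v =
      v.submatrix (sigE n (n * i)) (sigE n (n * i)) * alphaSix F n i := by
    apply alphaSix_conj
    · intro p hp q hq
      rw [hv, hudef, v_col _ _ hni _ _ _ _ _ _ _ hq, if_neg]
      rw [Fin.ext_iff]; omega
    · intro p hp q hq
      rw [hv, hudef, v4 _ _ _ _ _ _ _ _ _ _ (by omega) (by omega), if_neg (by omega)]
  have hD := hat_eq F n i hni z y₁ y₂ y₁' y₂' _ rfl (by
    rw [← hudef, ← hv, Matrix.transpose_submatrix, ← wMat_sig, Matrix.submatrix_mul_equiv,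
      Matrix.submatrix_mul_equiv, ← hw, hvw])
  rw [← hudef, ← hv] at hD
  have hAu : IsUnit (alphaSix F n i * h).det := by
    rw [Matrix.det_mul]; exact (alphaSix_det F n i).mul hunit
  rw [← hD, Matrix.mul_assoc (alphaSix F n i) h u, hc, ← Matrix.mul_assoc, ha,
    Matrix.mul_assoc _ (alphaSix F n i) h, Matrix.mul_nonsing_inv_cancel_right _ _ hAu]
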